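/- Related dynamical systems map solutions of rough differential equations to solutions: Let U ⊆ ℝ^d and Ũ ⊆ ℝ^{d̃} be open, f : U → Ũ smooth, and let F : U → L(W, ℝ^d) and F̃ : Ũ → L(W, ℝ^{d̃}) be smooth and f-related, i.e. f'(x)(F_w(x)) = F̃_w(f(x)) for all x ∈ U and w ∈ W. Let X = (x, 𝕏) be a weak-geometric p-rough path with control ω on [0,T], and suppose (z, z†) solves dz = F_{dX}(z) with z_0 = z̄₀ and z([0,T]) ⊆ U; that is: z_s† = F_{(·)}(z_s) for all s, (z, z†) is an ℝ^d-valued rough path controlled by X, and there exist C < ∞ and δ > 0 with |z_t − z_s − F_{x_{s,t}}(z_s) − G_s(𝕏_{s,t})| ≤ C ω(s,t)^{3/p} whenever 0 ≤ s ≤ t ≤ T and t − s ≤ δ, where G_s ∈ L(W ⊗ W, ℝ^d) is the linear extension of (w, w̃) ↦ (∂_{F_w(z_s)} F_{w̃})(z_s). Then z̃_t := f(z_t), z̃_s† := F̃_{(·)}(z̃_s) = f'(z_s) ∘ z_s† solves dz̃ = F̃_{dX}(z̃) with z̃_0 = f(z̄₀): (z̃, z̃†) is an ℝ^{d̃}-valued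 rough path controlled by X and there exist C̃ < ∞ and δ̃ > 0 with |z̃_t − z̃_s − F̃_{x_{s,t}}(z̃_s) − G̃_s(𝕏_{s,t})| ≤ C̃ ω(s,t)^{3/p} whenever t − s ≤ δ̃, where G̃_s is the linear extension of (w, w̃) ↦ (∂_{F̃_w(z̃_s)} F̃_{w̃})(z̃_s). -/

import Mathlib

noncomputable section

open scoped BigOperators

/-- `ℝ^n` with the Euclidean norm. -/
abbrev Euc (n : ℕ) : Type := EuclideanSpace ℝ (Fin n)

/-- The `i`-th standard basis vector of `ℝ^n`. -/
def eb {n : ℕ} (i : Fin n) : Euc n := EuclideanSpace.single i 1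

/-- Tensor product of two Euclidean vectors, realized in `ℝ^{n×m}` with the Euclidean norm. -/
def tensorE {n m : ℕ} (v : Euc n) (w : Euc m) : EuclideanSpace ℝ (Fin n × Fin m) :=
  (EuclideanSpace.equiv (Fin n × Fin m) ℝ).symm fun p => v p.1 * w p.2

/-- Application of the (unique) linear extension of a bilinear map `B` to a tensor
`X ∈ ℝ^n ⊗ ℝ^m ≅ ℝ^{n × m}`. -/
def tapply {n m : ℕ} {V : Type*} [NormedAddCommGroup V] [NormedSpace ℝ V]
    (B : Euc n → Euc m → V) (X : EuclideanSpace ℝ (Fin n × Fin m)) : V :=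
  ∑ q : Fin n × Fin m, X q • B (eb q.1) (eb q.2)
/-- `ω` is a control on the simplex `{(s,t) : 0 ≤ s ≤ t ≤ T}`. -/
structure IsControl (T : ℝ) (ω : ℝ → ℝ → ℝ) : Prop where
  cont : ContinuousOn (fun q : ℝ × ℝ => ω q.1 q.2)
    {q : ℝ × ℝ | 0 ≤ q.1 ∧ q.1 ≤ q.2 ∧ q.2 ≤ T}
  nonneg : ∀ ⦃s t : ℝ⦄, 0 ≤ s → s ≤ t → t ≤ T → 0 ≤ ω s t
  zero : ∀ ⦃s : ℝ⦄, 0 ≤ s → s ≤ T → ω s s = 0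
  superadditive : ∀ ⦃s t u : ℝ⦄, 0 ≤ s → s ≤ t → t ≤ u → u ≤ T → ω s t + ω t u ≤ ω s u
/-- `(x, XX)` is a `p`-rough path with control `ω` on `[0,T]`. -/
structure IsRoughPath (T p : ℝ) {k : ℕ} (ω : ℝ → ℝ → ℝ)
    (x : ℝ → Euc k) (XX : ℝ → ℝ → EuclideanSpace ℝ (Fin k × Fin k)) : Prop where
  cont_x : ContinuousOn x (Set.Icc 0 T)
  cont_XX : ContinuousOn (fun q : ℝ × ℝ => XX q.1 q.2)
    {q : ℝ × ℝ | 0 ≤ q.1 ∧ q.1 ≤ q.2 ∧ q.2 ≤ T}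
  chen : ∀ ⦃s t u : ℝ⦄, 0 ≤ s → s ≤ t → t ≤ u → u ≤ T →
    XX s u = XX s t + XX t u + tensorE (x t - x s) (x u - x t)
  bound_x : ∀ ⦃s t : ℝ⦄, 0 ≤ s → s ≤ t → t ≤ T → ‖x t - x s‖ ≤ ω s t ^ (1 / p)
  bound_XX : ∀ ⦃s t : ℝ⦄, 0 ≤ s → s ≤ t → t ≤ T → ‖XX s t‖ ≤ ω s t ^ (2 / p)
/-- The rough path `(x, XX)` is weak-geometric: the symmetric part of `XX s t` is
`(1/2) x_{s,t} ⊗ x_{s,t}`. -/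
def IsWeakGeometric (T : ℝ) {k : ℕ} (x : ℝ → Euc k)
    (XX : ℝ → ℝ → EuclideanSpace ℝ (Fin k × Fin k)) : Prop :=
  ∀ ⦃s t : ℝ⦄, 0 ≤ s → s ≤ t → t ≤ T → ∀ i j : Fin k,
    XX s t (i, j) + XX s t (j, i) = (x t - x s) i * (x t - x s) j
/-- `(y, y')` is a `V`-valued rough path controlled by `X = (x, ·)` (with control `ω`)
on the interval `[a, b]`. -/
def IsCRP (p : ℝ) {k : ℕ} (ω : ℝ → ℝ → ℝ) (x : ℝ → Euc k)
    {V : Type*} [NormedAddCommGroup V] [NormedSpace ℝ V]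
    (a b : ℝ) (y : ℝ → V) (y' : ℝ → Euc k →L[ℝ] V) : Prop :=
  ContinuousOn y (Set.Icc a b) ∧ ContinuousOn y' (Set.Icc a b) ∧
    ∃ C : ℝ, ∀ ⦃s t : ℝ⦄, a ≤ s → s ≤ t → t ≤ b →
      ‖y t - y s - y' s (x t - x s)‖ ≤ C * ω s t ^ (2 / p) ∧
      ‖y' t - y' s‖ ≤ C * ω s t ^ (1 / p)

/-- The second-order RDE coefficient `(w, w̃) ↦ (∂_{F_w(a)} F_{w̃})(a)`, i.e. the directional
derivative of `c ↦ F_{w̃}(c)` at `c = a` in the direction `F_w(a)`. -/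
def rdeQuad {d k : ℕ} (F : Euc d → Euc k →L[ℝ] Euc d) (a : Euc d)
    (w wt : Euc k) : Euc d :=
  fderiv ℝ (fun c => F c wt) a (F a w)

/-!
Expand `f` to second order along the trajectory `z`. The error is cubic in the increment of `z`,
uniformly since `z([0, T])` is compact, hence `O(ω ^ (3 / p))`, and replacing the increment of `z`
by its Davie expansion costs no more. The level-two terms left are `½ D²f(F x_{s,t}, F x_{s,t})`
and `Df (∂_F F) 𝕏_{s,t}`. As `D²f` is symmetric, weak geometricity rewrites the former as
`D²f(F, F) 𝕏_{s,t}`, and differentiating the relation `Df F = F̃ ∘ f` along `F` shows that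
`D²f(F, F) + Df (∂_F F)` is the second-order coefficient of `F̃` at `f(z_s)`.
-/

open Set Filter Topology Asymptotics

section Taylor

variable {E V : Type*} [NormedAddCommGroup E] [NormedSpace ℝ E]
  [NormedAddCommGroup V] [NormedSpace ℝ V]

theorem isBigO_principal_of_isCompact {X G H : Type*} [TopologicalSpace X]
    [SeminormedAddCommGroup G] [SeminormedAddCommGroup H] {K : Set X} (hK : IsCompact K)
    {f : X → G} {g : X → H} (hfg : ∀ a ∈ K, f =O[𝓝[K] a] g) : f =O[𝓟 K] g := by
  refine hK.induction_on (p := fun s => f =O[𝓟 s] g) (by simp)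
    (fun s t hst ht => ht.mono (principal_mono.2 hst))
    (fun s t hs ht => by simpa only [sup_principal] using hs.sup ht) fun a ha => ?_
  obtain ⟨C, hC⟩ := (hfg a ha).bound
  exact ⟨_, hC, isBigO_principal.2 ⟨C, fun y hy => hy⟩⟩

theorem isBigO_principal_prod_of_diag {G H : Type*} [NormedAddCommGroup G]
    [SeminormedAddCommGroup H] {K : Set G} (hK : IsCompact K) {R : G × G → H} {n : ℕ}
    (hR : ∀ a ∈ K, ∀ b ∈ K, ContinuousAt R (a, b))
    (hdiag : ∀ a ∈ K, R =O[𝓝 (a, a)] fun q => ‖q.1 - q.2‖ ^ n) :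
    R =O[𝓟 (K ×ˢ K)] fun q => ‖q.1 - q.2‖ ^ n := by
  refine isBigO_principal_of_isCompact (hK.prod hK) ?_
  rintro ⟨a, b⟩ ⟨ha, hb⟩
  refine IsBigO.mono ?_ nhdsWithin_le_nhds
  rcases eq_or_ne a b with rfl | hab
  · exact hdiag a ha
  · have hne : ‖a - b‖ ^ n ≠ 0 := pow_ne_zero n (norm_ne_zero_iff.2 (sub_ne_zero.2 hab))
    have hlim : Tendsto (fun q : G × G => ‖q.1 - q.2‖ ^ n) (𝓝 (a, b)) (𝓝 (‖a - b‖ ^ n)) :=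
      Continuous.tendsto (by fun_prop) (a, b)
    exact ((hR a ha b hb).isBigO_one ℝ).trans
      ((isBigO_const_const _ hne _).trans ((isEquivalent_const_iff_tendsto hne).2 hlim).isBigO_symm)

theorem isBigO_nhds_diag_of_hasFDerivAt {R : E × E → V} {R' : E × E → E →L[ℝ] V} {a : E} {n : ℕ}
    (hR_diag : ∀ y, R (y, y) = 0)
    (hR : ∀ᶠ q in 𝓝 (a, a), HasFDerivAt (fun y => R (y, q.2)) (R' q) q.1)
    (hR' : R' =O[𝓝 (a, a)] fun q => ‖q.1 - q.2‖ ^ n) :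
    R =O[𝓝 (a, a)] fun q => ‖q.1 - q.2‖ ^ (n + 1) := by
  obtain ⟨C, hC, hbound⟩ := hR'.exists_nonneg
  obtain ⟨r, hr, hball⟩ := Metric.eventually_nhds_iff_ball.1 (hR.and hbound.bound)
  refine IsBigO.of_bound C (eventually_of_mem (Metric.ball_mem_nhds _ hr) ?_)
  rintro ⟨y, c⟩ hyc
  obtain ⟨hy, hc⟩ : y ∈ Metric.ball a r ∧ c ∈ Metric.ball a r := by
    rwa [← ball_prod_same] at hyc
  have hconvex : Convex ℝ (Metric.ball a r ∩ Metric.closedBall c ‖y - c‖) :=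
    (convex_ball a r).inter (convex_closedBall c _)
  have hball_c (b : E) (hb : b ∈ Metric.ball a r) :=
    hball (b, c) (by rw [← ball_prod_same]; exact ⟨hb, hc⟩)
  have hderiv_le (b : E) (hb : b ∈ Metric.ball a r ∩ Metric.closedBall c ‖y - c‖) :
      ‖R' (b, c)‖ ≤ C * ‖y - c‖ ^ n := by
    have hbc : ‖b - c‖ ≤ ‖y - c‖ := by simpa [dist_eq_norm] using hb.2
    calc ‖R' (b, c)‖ ≤ C * ‖b - c‖ ^ n := by simpa using (hball_c b hb.1).2
      _ ≤ C * ‖y - c‖ ^ n := by gcongr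
  have hmvt := hconvex.norm_image_sub_le_of_norm_hasFDerivWithin_le
    (f := fun b => R (b, c)) (f' := fun b => R' (b, c))
    (fun b hb => (hball_c b hb.1).1.hasFDerivWithinAt) hderiv_le
    ⟨hc, by simp⟩ ⟨hy, by simp [dist_eq_norm]⟩
  simpa [hR_diag, pow_succ, mul_assoc] using hmvt

theorem isBigO_nhds_diag_taylor_one {f : E → V} {a : E} (hf : ContDiffAt ℝ 2 f a) :
    (fun q : E × E => f q.1 - f q.2 - fderiv ℝ f q.2 (q.1 - q.2))
      =O[𝓝 (a, a)] fun q => ‖q.1 - q.2‖ ^ 2 := by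
  have hdf : ContDiffAt ℝ 1 (fderiv ℝ f) a := hf.fderiv_right (by norm_num)
  refine isBigO_nhds_diag_of_hasFDerivAt
    (R' := fun q => fderiv ℝ f q.1 - fderiv ℝ f q.2) (by simp) ?_ ?_
  · filter_upwards [continuousAt_fst.eventually (hf.eventually (by simp))] with q hq
    have hsub := (hasFDerivAt_id (𝕜 := ℝ) q.1).sub_const q.2
    exact ((hq.differentiableAt (by simp)).hasFDerivAt.sub_const _).sub
      ((fderiv ℝ f q.2).hasFDerivAt.comp q.1 hsub)
  · simpa only [pow_one] using (hdf.hasStrictFDerivAt (by simp)).isBigO_sub.norm_right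

theorem hasFDerivAt_half_smul_diag {B : E →L[ℝ] E →L[ℝ] V} (hB : ∀ v w, B v w = B w v) (c y : E) :
    HasFDerivAt (fun y => (1 / 2 : ℝ) • B (y - c) (y - c)) (B (y - c)) y := by
  have hsub : HasFDerivAt (fun y : E => y - c) (ContinuousLinearMap.id ℝ E) y :=
    (hasFDerivAt_id y).sub_const c
  refine (((B.hasFDerivAt.comp y hsub).clm_apply hsub).const_smul (1 / 2 : ℝ)).congr_fderiv ?_
  ext u
  have hu : B u y - B u c = B y u - B c u := by rw [hB u y, hB u c]
  simp [hu, ← two_smul ℝ, smul_smul]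

theorem isBigO_nhds_diag_taylor_two {f : E → V} {a : E} (hf : ContDiffAt ℝ 3 f a) :
    (fun q : E × E => f q.1 - f q.2 - fderiv ℝ f q.2 (q.1 - q.2)
        - (1 / 2 : ℝ) • fderiv ℝ (fderiv ℝ f) q.2 (q.1 - q.2) (q.1 - q.2))
      =O[𝓝 (a, a)] fun q => ‖q.1 - q.2‖ ^ 3 := by
  have hdf : ContDiffAt ℝ 2 (fderiv ℝ f) a := hf.fderiv_right (by norm_num)
  refine isBigO_nhds_diag_of_hasFDerivAt
    (R' := fun q => fderiv ℝ f q.1 - fderiv ℝ f q.2 - fderiv ℝ (fderiv ℝ f) q.2 (q.1 - q.2))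
    (by simp) ?_ (isBigO_nhds_diag_taylor_one hdf)
  filter_upwards [continuousAt_fst.eventually (hf.eventually (by simp)),
    continuousAt_snd.eventually (hf.eventually (by simp))] with q hq₁ hq₂
  have hsub := (hasFDerivAt_id (𝕜 := ℝ) q.1).sub_const q.2
  have hsymm := hq₂.isSymmSndFDerivAt
    (by rw [minSmoothness_of_isRCLikeNormedField]; norm_num)
  exact (((hq₁.differentiableAt (by simp)).hasFDerivAt.sub_const _).sub
    ((fderiv ℝ f q.2).hasFDerivAt.comp q.1 hsub)).sub (hasFDerivAt_half_smul_diag hsymm q.2 q.1)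

variable {K : Set E} {f : E → V}

theorem isBigO_principal_prod_sub (hK : IsCompact K) (hf : ∀ a ∈ K, ContDiffAt ℝ 1 f a) :
    (fun q : E × E => f q.1 - f q.2) =O[𝓟 (K ×ˢ K)] fun q => q.1 - q.2 := by
  suffices h : (fun q : E × E => f q.1 - f q.2) =O[𝓟 (K ×ˢ K)] fun q => ‖q.1 - q.2‖ ^ 1 by
    simpa only [pow_one, isBigO_norm_right] using h
  refine isBigO_principal_prod_of_diag hK (fun a ha b hb => ?_) fun a ha => ?_
  · exact ((hf a ha).continuousAt.comp continuousAt_fst).sub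
      ((hf b hb).continuousAt.comp continuousAt_snd)
  · simpa only [pow_one] using ((hf a ha).hasStrictFDerivAt (by simp)).isBigO_sub.norm_right

theorem isBigO_principal_prod_taylor_one (hK : IsCompact K) (hf : ∀ a ∈ K, ContDiffAt ℝ 2 f a) :
    (fun q : E × E => f q.1 - f q.2 - fderiv ℝ f q.2 (q.1 - q.2))
      =O[𝓟 (K ×ˢ K)] fun q => ‖q.1 - q.2‖ ^ 2 := by
  refine isBigO_principal_prod_of_diag hK (fun a ha b hb => ?_)
    fun a ha => isBigO_nhds_diag_taylor_one (hf a ha)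
  have hdf : ContDiffAt ℝ 1 (fderiv ℝ f) b := (hf b hb).fderiv_right (by norm_num)
  exact (((hf a ha).continuousAt.comp continuousAt_fst).sub
    ((hf b hb).continuousAt.comp continuousAt_snd)).sub
      ((hdf.continuousAt.comp continuousAt_snd).clm_apply (by fun_prop))

theorem isBigO_principal_prod_taylor_two (hK : IsCompact K) (hf : ∀ a ∈ K, ContDiffAt ℝ 3 f a) :
    (fun q : E × E => f q.1 - f q.2 - fderiv ℝ f q.2 (q.1 - q.2)
        - (1 / 2 : ℝ) • fderiv ℝ (fderiv ℝ f) q.2 (q.1 - q.2) (q.1 - q.2))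
      =O[𝓟 (K ×ˢ K)] fun q => ‖q.1 - q.2‖ ^ 3 := by
  refine isBigO_principal_prod_of_diag hK (fun a ha b hb => ?_)
    fun a ha => isBigO_nhds_diag_taylor_two (hf a ha)
  have hdf : ContDiffAt ℝ 2 (fderiv ℝ f) b := (hf b hb).fderiv_right (by norm_num)
  have hddf : ContDiffAt ℝ 1 (fderiv ℝ (fderiv ℝ f)) b := hdf.fderiv_right (by norm_num)
  exact ((((hf a ha).continuousAt.comp continuousAt_fst).sub
    ((hf b hb).continuousAt.comp continuousAt_snd)).sub
      ((hdf.continuousAt.comp continuousAt_snd).clm_apply (by fun_prop))).sub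
        ((((hddf.continuousAt.comp continuousAt_snd).clm_apply (by fun_prop)).clm_apply
          (by fun_prop)).const_smul _)

end Taylor

section IsBigO

variable {ι E V : Type*} [NormedAddCommGroup E] [NormedSpace ℝ E]
  [NormedAddCommGroup V] [NormedSpace ℝ V] {l : Filter ι}

theorem isBigO_clm_apply {A : ι → E →L[ℝ] V} {u : ι → E} {g₁ g₂ : ι → ℝ}
    (hA : A =O[l] g₁) (hu : u =O[l] g₂) : (fun i => A i (u i)) =O[l] fun i => g₁ i * g₂ i :=
  (IsBigO.of_norm_le fun i => (A i).le_opNorm (u i)).trans (hA.norm_left.mul hu.norm_left)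

theorem isBigO_clm_comp {F : Type*} [NormedAddCommGroup F] [NormedSpace ℝ F]
    {A : ι → E →L[ℝ] V} {B : ι → F →L[ℝ] E} {g₁ g₂ : ι → ℝ}
    (hA : A =O[l] g₁) (hB : B =O[l] g₂) : (fun i => (A i).comp (B i)) =O[l] fun i => g₁ i * g₂ i :=
  (IsBigO.of_norm_le fun i => (A i).opNorm_comp_le (B i)).trans (hA.norm_left.mul hB.norm_left)

theorem isBigO_one_comp_of_continuousOn {X G : Type*} [TopologicalSpace X]
    [SeminormedAddCommGroup G] {g : X → G} {K : Set X} (hg : ContinuousOn g K) (hK : IsCompact K)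
    {φ : ι → X} {S : Set ι} (hφ : MapsTo φ S K) :
    (fun i => g (φ i)) =O[𝓟 S] fun _ => (1 : ℝ) :=
  (hg.isBigO_principal hK (c := (1 : ℝ)) (by simp)).comp_tendsto
    (tendsto_principal_principal.2 hφ)

/-- Here `v` stands for an increment of a path, `u` and `Q` for its first- and second-order terms in
the driver, and `D`, `B` for the derivatives of `f` at the base point. -/
theorem isBigO_taylor_two_subst {η : ι → ℝ} {D : ι → E →L[ℝ] V} {B : ι → E →L[ℝ] E →L[ℝ] V}
    {u v Q : ι → E} {Δf : ι → V}
    (hD : D =O[l] fun _ => (1 : ℝ)) (hB : B =O[l] fun _ => (1 : ℝ))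
    (hu : u =O[l] η) (hv : v =O[l] η)
    (hvu : (fun i => v i - u i) =O[l] fun i => η i ^ 2)
    (hvuQ : (fun i => v i - u i - Q i) =O[l] fun i => η i ^ 3)
    (hΔf : (fun i => Δf i - D i (v i) - (1 / 2 : ℝ) • B i (v i) (v i)) =O[l] fun i => ‖v i‖ ^ 3) :
    (fun i => Δf i - D i (u i) - ((1 / 2 : ℝ) • B i (u i) (u i) + D i (Q i)))
      =O[l] fun i => η i ^ 3 := by
  have hrem := hΔf.trans (hv.norm_left.pow 3)
  have hfirst : (fun i => D i (v i - u i - Q i)) =O[l] fun i => η i ^ 3 := by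
    simpa only [one_mul] using isBigO_clm_apply hD hvuQ
  have hleft : (fun i => B i (v i - u i) (v i)) =O[l] fun i => η i ^ 3 := by
    simpa only [one_mul, ← pow_succ] using isBigO_clm_apply (isBigO_clm_apply hB hvu) hv
  have hright : (fun i => B i (u i) (v i - u i)) =O[l] fun i => η i ^ 3 := by
    simpa only [one_mul, ← pow_succ'] using isBigO_clm_apply (isBigO_clm_apply hB hu) hvu
  refine ((hrem.add hfirst).add ((hleft.add hright).const_smul_left (1 / 2 : ℝ))).congr_left
    fun i => ?_
  simp only [map_sub, sub_apply, smul_add, smul_sub, Pi.smul_apply]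
  abel

end IsBigO

section RDECoefficient

variable {W E V : Type*} [NormedAddCommGroup W] [NormedSpace ℝ W] [NormedAddCommGroup E]
  [NormedSpace ℝ E] [NormedAddCommGroup V] [NormedSpace ℝ V]

/-- The second-order coefficient `(w, w') ↦ (∂_{F_w(a)} F_{w'})(a)` of the equation
`dz = F_{dX}(z)` in an arbitrary normed space; `rdeQuad` is its Euclidean case. -/
def rdeCoeff (F : E → W →L[ℝ] E) (a : E) (w w' : W) : E :=
  fderiv ℝ (fun c => F c w') a (F a w)

/-- The dynamical systems `F` and `Ft` are `f`-related on `U`, i.e. `f` pushes each vector field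
`F_w` on `U` forward to `Ft_w`. -/
def RelatedOn (f : E → V) (F : E → W →L[ℝ] E) (Ft : V → W →L[ℝ] V) (U : Set E) : Prop :=
  ∀ c ∈ U, ∀ w, fderiv ℝ f c (F c w) = Ft (f c) w

variable {f : E → V} {F : E → W →L[ℝ] E} {Ft : V → W →L[ℝ] V} {U : Set E}

theorem RelatedOn.fderiv_comp (h : RelatedOn f F Ft U) {a : E} (ha : a ∈ U) :
    (fderiv ℝ f a).comp (F a) = Ft (f a) :=
  ContinuousLinearMap.ext (h a ha)

theorem RelatedOn.rdeCoeff_eq (h : RelatedOn f F Ft U) {a : E} (hU : U ∈ 𝓝 a)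
    (hf : ContDiffAt ℝ 2 f a) (hF : DifferentiableAt ℝ F a) (hFt : DifferentiableAt ℝ Ft (f a))
    (w w' : W) :
    rdeCoeff Ft (f a) w w' =
      fderiv ℝ (fderiv ℝ f) a (F a w) (F a w') + fderiv ℝ f a (rdeCoeff F a w w') := by
  have hdf : DifferentiableAt ℝ (fderiv ℝ f) a :=
    (hf.fderiv_right (m := 1) (by norm_num)).differentiableAt (by simp)
  have hFw := (hF.clm_apply (differentiableAt_const w')).hasFDerivAt
  have hFtw := (hFt.clm_apply (differentiableAt_const w')).hasFDerivAt
  have hleft := hdf.hasFDerivAt.clm_apply hFw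
  have hright := (hFtw.comp a (hf.differentiableAt (by simp)).hasFDerivAt).congr_of_eventuallyEq
    (f₁ := fun c => fderiv ℝ f c (F c w')) (eventually_of_mem hU fun c hc => h c hc w')
  have hderiv := DFunLike.congr_fun (hleft.unique hright) (F a w)
  simp only [add_apply, ContinuousLinearMap.comp_apply, ContinuousLinearMap.flip_apply,
    h a (mem_of_mem_nhds hU) w] at hderiv
  rw [rdeCoeff, rdeCoeff, ← hderiv, add_comm]

end RDECoefficient

section Tensor

variable {V V' : Type*} [NormedAddCommGroup V] [NormedSpace ℝ V]
  [NormedAddCommGroup V'] [NormedSpace ℝ V'] {n m : ℕ}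

theorem tapply_add (B B' : Euc n → Euc m → V) (X : EuclideanSpace ℝ (Fin n × Fin m)) :
    tapply (fun w w' => B w w' + B' w w') X = tapply B X + tapply B' X := by
  simp only [tapply, smul_add, Finset.sum_add_distrib]

theorem map_tapply (A : V →L[ℝ] V') (B : Euc n → Euc m → V)
    (X : EuclideanSpace ℝ (Fin n × Fin m)) :
    A (tapply B X) = tapply (fun w w' => A (B w w')) X := by
  simp only [tapply, map_sum, map_smul]

theorem sum_smul_eb (ξ : Euc n) : ∑ i, ξ i • (eb i : Euc n) = ξ := by
  ext j
  simp [eb, Pi.single_apply]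

theorem sum_sum_smul_eb (B : Euc n →L[ℝ] Euc m →L[ℝ] V) (ξ : Euc n) (ζ : Euc m) :
    ∑ i, ∑ j, (ξ i * ζ j) • B (eb i) (eb j) = B ξ ζ := by
  conv_rhs => rw [← sum_smul_eb ξ, ← sum_smul_eb ζ]
  simp only [map_sum, map_smul, sum_apply, smul_apply, Finset.smul_sum, smul_smul]
  rw [Finset.sum_comm]
  simp only [mul_comm]

/-- Only the symmetric part of `X` is seen by a symmetric bilinear map. -/
theorem tapply_of_symmetric {B : Euc n →L[ℝ] Euc n →L[ℝ] V} (hB : ∀ w w', B w w' = B w' w)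
    {ξ : Euc n} {X : EuclideanSpace ℝ (Fin n × Fin n)}
    (hX : ∀ i j, X (i, j) + X (j, i) = ξ i * ξ j) :
    tapply (fun w w' => B w w') X = (1 / 2 : ℝ) • B ξ ξ := by
  have hswap : ∑ i, ∑ j, X (j, i) • B (eb i) (eb j) = ∑ i, ∑ j, X (i, j) • B (eb i) (eb j) := by
    rw [Finset.sum_comm]
    exact Finset.sum_congr rfl fun i _ => Finset.sum_congr rfl fun j _ => by rw [hB]
  rw [tapply, Fintype.sum_prod_type, ← sum_sum_smul_eb]
  simp only [← hX, add_smul, Finset.sum_add_distrib]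
  rw [hswap, ← two_smul ℝ, smul_smul]
  norm_num

end Tensor

section ControlledPath

/-- The simplex of pairs of times `(s, t)` with `a ≤ s ≤ t ≤ b`. -/
def timeSimplex (a b : ℝ) : Set (ℝ × ℝ) := {q | a ≤ q.1 ∧ q.1 ≤ q.2 ∧ q.2 ≤ b}

theorem mapsTo_fst_timeSimplex (a b : ℝ) : MapsTo Prod.fst (timeSimplex a b) (Icc a b) :=
  fun _ hq => ⟨hq.1, hq.2.1.trans hq.2.2⟩

theorem mapsTo_snd_timeSimplex (a b : ℝ) : MapsTo Prod.snd (timeSimplex a b) (Icc a b) :=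
  fun _ hq => ⟨hq.1.trans hq.2.1, hq.2.2⟩

/-- The size `ω(s,t)^{1/p}` of a first-order increment, as a function of the pair `q = (s, t)`.
Terms of order `n` are measured by its `n`-th power. -/
def controlScale (p : ℝ) (ω : ℝ → ℝ → ℝ) (q : ℝ × ℝ) : ℝ := ω q.1 q.2 ^ (1 / p)

variable {T p a b : ℝ} {ω : ℝ → ℝ → ℝ} {k : ℕ} {x : ℝ → Euc k}
  {XX : ℝ → ℝ → EuclideanSpace ℝ (Fin k × Fin k)}
  {E V : Type*} [NormedAddCommGroup E] [NormedSpace ℝ E] [NormedAddCommGroup V] [NormedSpace ℝ V]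

theorem controlScale_pow {q : ℝ × ℝ} (hq : 0 ≤ ω q.1 q.2) (n : ℕ) :
    controlScale p ω q ^ n = ω q.1 q.2 ^ (n / p) := by
  rw [controlScale, ← Real.rpow_natCast, ← Real.rpow_mul hq, one_div_mul_eq_div]

theorem exists_bound_iff_isBigO_controlScale_pow {G : Type*} [SeminormedAddCommGroup G]
    {S : Set (ℝ × ℝ)}
    (hω : ∀ q ∈ S, 0 ≤ ω q.1 q.2) (g : ℝ × ℝ → G) (n : ℕ) :
    (∃ C, ∀ q ∈ S, ‖g q‖ ≤ C * ω q.1 q.2 ^ (n / p)) ↔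
      g =O[𝓟 S] fun q => controlScale p ω q ^ n := by
  rw [isBigO_principal]
  refine exists_congr fun C => forall₂_congr fun q hq => ?_
  rw [controlScale_pow (hω q hq), Real.norm_of_nonneg (Real.rpow_nonneg (hω q hq) _)]

theorem IsControl.nonneg_of_mem (hω : IsControl T ω) {q : ℝ × ℝ} (hq : q ∈ timeSimplex 0 T) :
    0 ≤ ω q.1 q.2 :=
  hω.nonneg hq.1 hq.2.1 hq.2.2

theorem IsControl.le_total (hω : IsControl T ω) {s t : ℝ} (hs : 0 ≤ s) (hst : s ≤ t) (ht : t ≤ T) :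
    ω s t ≤ ω 0 T := by
  have hleft := hω.superadditive le_rfl hs hst ht
  have hright := hω.superadditive le_rfl (hs.trans hst) ht le_rfl
  have hleft_nonneg := hω.nonneg le_rfl hs (hst.trans ht)
  have hright_nonneg := hω.nonneg (hs.trans hst) ht le_rfl
  linarith

theorem IsControl.isBigO_controlScale_one (hω : IsControl T ω) (hp : 0 < p) :
    controlScale p ω =O[𝓟 (timeSimplex 0 T)] fun _ => (1 : ℝ) := by
  refine isBigO_principal.2 ⟨ω 0 T ^ (1 / p), fun q hq => ?_⟩
  have hq_nonneg := hω.nonneg_of_mem hq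
  rw [norm_one, mul_one, controlScale, Real.norm_of_nonneg (Real.rpow_nonneg hq_nonneg _)]
  exact Real.rpow_le_rpow hq_nonneg (hω.le_total hq.1 hq.2.1 hq.2.2) (by positivity)

theorem IsRoughPath.isBigO_sub (hX : IsRoughPath T p ω x XX) :
    (fun q : ℝ × ℝ => x q.2 - x q.1) =O[𝓟 (timeSimplex 0 T)] controlScale p ω :=
  isBigO_principal.2 ⟨1, fun _ hq => by
    rw [one_mul]
    exact (hX.bound_x hq.1 hq.2.1 hq.2.2).trans (le_abs_self _)⟩

variable {y : ℝ → E} {y' : ℝ → Euc k →L[ℝ] E}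

theorem isCRP_iff_isBigO (hω : ∀ q ∈ timeSimplex a b, 0 ≤ ω q.1 q.2) :
    IsCRP p ω x a b y y' ↔ ContinuousOn y (Icc a b) ∧ ContinuousOn y' (Icc a b) ∧
      (fun q : ℝ × ℝ => y q.2 - y q.1 - y' q.1 (x q.2 - x q.1))
        =O[𝓟 (timeSimplex a b)] (fun q => controlScale p ω q ^ 2) ∧
      (fun q : ℝ × ℝ => y' q.2 - y' q.1) =O[𝓟 (timeSimplex a b)] controlScale p ω := by
  have hrem := exists_bound_iff_isBigO_controlScale_pow (p := p) hω
    (fun q : ℝ × ℝ => y q.2 - y q.1 - y' q.1 (x q.2 - x q.1)) 2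
  have hderiv := exists_bound_iff_isBigO_controlScale_pow (p := p) hω
    (fun q : ℝ × ℝ => y' q.2 - y' q.1) 1
  simp only [Nat.cast_ofNat, Nat.cast_one, pow_one] at hrem hderiv
  rw [IsCRP, ← hrem, ← hderiv]
  refine and_congr_right fun _ => and_congr_right fun _ => ⟨?_, ?_⟩
  · rintro ⟨C, hC⟩
    exact ⟨⟨C, fun q hq => (hC hq.1 hq.2.1 hq.2.2).1⟩, ⟨C, fun q hq => (hC hq.1 hq.2.1 hq.2.2).2⟩⟩
  · rintro ⟨⟨C, hC⟩, ⟨C', hC'⟩⟩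
    refine ⟨max C C', fun s t hs hst ht => ?_⟩
    have hq : (s, t) ∈ timeSimplex a b := ⟨hs, hst, ht⟩
    have hω_nonneg := hω _ hq
    exact ⟨(hC _ hq).trans (by gcongr; exact le_max_left C C'),
      (hC' _ hq).trans (by gcongr; exact le_max_right C C')⟩

theorem IsCRP.isBigO_apply (hy : IsCRP p ω x a b y y')
    (hx : (fun q : ℝ × ℝ => x q.2 - x q.1) =O[𝓟 (timeSimplex a b)] controlScale p ω) :
    (fun q : ℝ × ℝ => y' q.1 (x q.2 - x q.1)) =O[𝓟 (timeSimplex a b)] controlScale p ω := by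
  simpa only [one_mul] using isBigO_clm_apply
    (isBigO_one_comp_of_continuousOn hy.2.1 isCompact_Icc (mapsTo_fst_timeSimplex a b)) hx

theorem IsCRP.isBigO_sub (hy : IsCRP p ω x a b y y')
    (hω : ∀ q ∈ timeSimplex a b, 0 ≤ ω q.1 q.2)
    (hη : controlScale p ω =O[𝓟 (timeSimplex a b)] fun _ => (1 : ℝ))
    (hx : (fun q : ℝ × ℝ => x q.2 - x q.1) =O[𝓟 (timeSimplex a b)] controlScale p ω) :
    (fun q : ℝ × ℝ => y q.2 - y q.1) =O[𝓟 (timeSimplex a b)] controlScale p ω := by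
  obtain ⟨-, -, hrem, -⟩ := (isCRP_iff_isBigO hω).1 hy
  have hsq : (fun q => controlScale p ω q ^ 2) =O[𝓟 (timeSimplex a b)] controlScale p ω := by
    simpa only [sq, mul_one] using (isBigO_refl (controlScale p ω) _).mul hη
  simpa only [sub_add_cancel] using (hrem.trans hsq).add (hy.isBigO_apply hx)

theorem tendsto_prod_image_timeSimplex {G : Type*} (y : ℝ → G) (a b : ℝ) :
    Tendsto (fun q : ℝ × ℝ => (y q.2, y q.1)) (𝓟 (timeSimplex a b))
      (𝓟 ((y '' Icc a b) ×ˢ (y '' Icc a b))) :=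
  tendsto_principal_principal.2 fun _ hq =>
    ⟨mem_image_of_mem y (mapsTo_snd_timeSimplex a b hq),
      mem_image_of_mem y (mapsTo_fst_timeSimplex a b hq)⟩

theorem IsCRP.comp {f : E → V} (hf : ∀ c ∈ y '' Icc a b, ContDiffAt ℝ 2 f c)
    (hω : ∀ q ∈ timeSimplex a b, 0 ≤ ω q.1 q.2)
    (hη : controlScale p ω =O[𝓟 (timeSimplex a b)] fun _ => (1 : ℝ))
    (hx : (fun q : ℝ × ℝ => x q.2 - x q.1) =O[𝓟 (timeSimplex a b)] controlScale p ω)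
    (hy : IsCRP p ω x a b y y') :
    IsCRP p ω x a b (fun s => f (y s)) (fun s => (fderiv ℝ f (y s)).comp (y' s)) := by
  have hΔy := hy.isBigO_sub hω hη hx
  obtain ⟨hyc, hy'c, hrem, hΔy'⟩ := (isCRP_iff_isBigO hω).1 hy
  have hK : IsCompact (y '' Icc a b) := isCompact_Icc.image_of_continuousOn hyc
  have hdf : ∀ c ∈ y '' Icc a b, ContDiffAt ℝ 1 (fderiv ℝ f) c := fun c hc =>
    (hf c hc).fderiv_right (by norm_num)
  have hfy : ContinuousOn (fun s => f (y s)) (Icc a b) := fun s hs =>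
    (hf _ (mem_image_of_mem y hs)).continuousAt.comp_continuousWithinAt (hyc s hs)
  have hdfy : ContinuousOn (fun s => fderiv ℝ f (y s)) (Icc a b) := fun s hs =>
    (hdf _ (mem_image_of_mem y hs)).continuousAt.comp_continuousWithinAt (hyc s hs)
  have hpair := tendsto_prod_image_timeSimplex y a b
  have hD := isBigO_one_comp_of_continuousOn hdfy isCompact_Icc (mapsTo_fst_timeSimplex a b)
  have hy't := isBigO_one_comp_of_continuousOn hy'c isCompact_Icc (mapsTo_snd_timeSimplex a b)
  refine (isCRP_iff_isBigO hω).2 ⟨hfy, hdfy.clm_comp hy'c, ?_, ?_⟩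
  · have htaylor := ((isBigO_principal_prod_taylor_one hK hf).comp_tendsto hpair).trans
      (hΔy.norm_left.pow 2)
    have hDrem := (isBigO_clm_apply hD hrem).congr_right fun _ => one_mul _
    refine (htaylor.add hDrem).congr_left fun q => ?_
    simp only [Function.comp_apply, map_sub, ContinuousLinearMap.comp_apply]
    abel
  · have hΔD := ((isBigO_principal_prod_sub hK hdf).comp_tendsto hpair).trans hΔy
    have hΔDy' := (isBigO_clm_comp hΔD hy't).congr_right fun _ => mul_one _
    have hDΔy' := (isBigO_clm_comp hD hΔy').congr_right fun _ => one_mul _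
    refine (hΔDy'.add hDΔy').congr_left fun q => ?_
    simp only [Function.comp_apply, ContinuousLinearMap.sub_comp, ContinuousLinearMap.comp_sub]
    abel

end ControlledPath

section RDE

variable {T p : ℝ} {ω : ℝ → ℝ → ℝ} {k : ℕ} {x : ℝ → Euc k}
  {XX : ℝ → ℝ → EuclideanSpace ℝ (Fin k × Fin k)}
  {E V : Type*} [NormedAddCommGroup E] [NormedSpace ℝ E] [NormedAddCommGroup V] [NormedSpace ℝ V]

/-- Davie's third-order local expansion of a solution of the rough differential equation
`dz = F_{dX}(z)` on `[0, T]`, where `X = (x, XX)`. -/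
def HasDavieExpansion (T p : ℝ) (ω : ℝ → ℝ → ℝ) (x : ℝ → Euc k)
    (XX : ℝ → ℝ → EuclideanSpace ℝ (Fin k × Fin k)) (F : E → Euc k →L[ℝ] E) (z : ℝ → E) : Prop :=
  ∃ C δ : ℝ, 0 < δ ∧ ∀ ⦃s t : ℝ⦄, 0 ≤ s → s ≤ t → t ≤ T → t - s ≤ δ →
    ‖z t - z s - F (z s) (x t - x s) - tapply (rdeCoeff F (z s)) (XX s t)‖ ≤ C * ω s t ^ (3 / p)

/-- `(z, z')` solves the rough differential equation `dz = F_{dX}(z)` on `[0, T]`, where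
`X = (x, XX)`. The initial value is not part of the notion. -/
structure IsRDESolution (T p : ℝ) (ω : ℝ → ℝ → ℝ) (x : ℝ → Euc k)
    (XX : ℝ → ℝ → EuclideanSpace ℝ (Fin k × Fin k)) (F : E → Euc k →L[ℝ] E)
    (z : ℝ → E) (z' : ℝ → Euc k →L[ℝ] E) : Prop where
  deriv_eq : ∀ s ∈ Icc 0 T, z' s = F (z s)
  isCRP : IsCRP p ω x 0 T z z'
  expansion : HasDavieExpansion T p ω x XX F z

theorem hasDavieExpansion_iff_isBigO (hω : IsControl T ω) {F : E → Euc k →L[ℝ] E} {z : ℝ → E} :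
    HasDavieExpansion T p ω x XX F z ↔
    ∃ δ > 0, (fun q : ℝ × ℝ => z q.2 - z q.1 - F (z q.1) (x q.2 - x q.1)
        - tapply (rdeCoeff F (z q.1)) (XX q.1 q.2))
      =O[𝓟 (timeSimplex 0 T ∩ {q | q.2 - q.1 ≤ δ})] fun q => controlScale p ω q ^ 3 := by
  have hbound (δ : ℝ) := exists_bound_iff_isBigO_controlScale_pow (p := p)
    (S := timeSimplex 0 T ∩ {q | q.2 - q.1 ≤ δ}) (fun q hq => hω.nonneg_of_mem hq.1)
    (fun q => z q.2 - z q.1 - F (z q.1) (x q.2 - x q.1)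
      - tapply (rdeCoeff F (z q.1)) (XX q.1 q.2)) 3
  simp only [← hbound, Nat.cast_ofNat]
  constructor
  · rintro ⟨C, δ, hδ, h⟩
    exact ⟨δ, hδ, C, fun q hq => h hq.1.1 hq.1.2.1 hq.1.2.2 hq.2⟩
  · rintro ⟨δ, hδ, C, h⟩
    exact ⟨C, δ, hδ, fun s t hs hst ht hts => h (s, t) ⟨⟨hs, hst, ht⟩, hts⟩⟩

variable {U : Set E} {f : E → V} {F : E → Euc k →L[ℝ] E} {Ft : V → Euc k →L[ℝ] V}

/-- Weak geometricity turns the contribution of `D²f` into the second-order Taylor term of `f`. -/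
theorem RelatedOn.tapply_rdeCoeff (h : RelatedOn f F Ft U) {a : E} (hU : U ∈ 𝓝 a)
    (hf : ContDiffAt ℝ 2 f a) (hF : DifferentiableAt ℝ F a) (hFt : DifferentiableAt ℝ Ft (f a))
    {ξ : Euc k} {X : EuclideanSpace ℝ (Fin k × Fin k)}
    (hX : ∀ i j, X (i, j) + X (j, i) = ξ i * ξ j) :
    tapply (rdeCoeff Ft (f a)) X =
      (1 / 2 : ℝ) • fderiv ℝ (fderiv ℝ f) a (F a ξ) (F a ξ)
        + fderiv ℝ f a (tapply (rdeCoeff F a) X) := by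
  have hsymm := hf.isSymmSndFDerivAt (by simp)
  have hquad := tapply_of_symmetric (B := (fderiv ℝ (fderiv ℝ f) a).bilinearComp (F a) (F a))
    (fun w w' => hsymm (F a w) (F a w')) hX
  simp only [ContinuousLinearMap.bilinearComp_apply] at hquad
  rw [← hquad, map_tapply, ← tapply_add]
  congr 1
  funext w w'
  exact h.rdeCoeff_eq hU hf hF hFt w w'

theorem IsRDESolution.isBigO_expansion_comp (hp : 0 < p) (hω : IsControl T ω)
    (hX : IsRoughPath T p ω x XX) {z : ℝ → E} {z' : ℝ → Euc k →L[ℝ] E}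
    (hz : IsRDESolution T p ω x XX F z z') (hf : ∀ c ∈ z '' Icc 0 T, ContDiffAt ℝ 3 f c) :
    ∃ δ > 0, (fun q : ℝ × ℝ => f (z q.2) - f (z q.1) - fderiv ℝ f (z q.1) (z' q.1 (x q.2 - x q.1))
        - ((1 / 2 : ℝ) • fderiv ℝ (fderiv ℝ f) (z q.1) (z' q.1 (x q.2 - x q.1))
              (z' q.1 (x q.2 - x q.1))
          + fderiv ℝ f (z q.1) (tapply (rdeCoeff F (z q.1)) (XX q.1 q.2))))
      =O[𝓟 (timeSimplex 0 T ∩ {q | q.2 - q.1 ≤ δ})] fun q => controlScale p ω q ^ 3 := by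
  have hω_nonneg : ∀ q ∈ timeSimplex 0 T, 0 ≤ ω q.1 q.2 := fun q => hω.nonneg_of_mem
  have hu := hz.isCRP.isBigO_apply hX.isBigO_sub
  have hv := hz.isCRP.isBigO_sub hω_nonneg (hω.isBigO_controlScale_one hp) hX.isBigO_sub
  obtain ⟨hzc, -, hvu, -⟩ := (isCRP_iff_isBigO hω_nonneg).1 hz.isCRP
  obtain ⟨δ, hδ, hexp⟩ := (hasDavieExpansion_iff_isBigO hω).1 hz.expansion
  have hexp' : (fun q : ℝ × ℝ => z q.2 - z q.1 - z' q.1 (x q.2 - x q.1)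
        - tapply (rdeCoeff F (z q.1)) (XX q.1 q.2))
      =O[𝓟 (timeSimplex 0 T ∩ {q | q.2 - q.1 ≤ δ})] fun q => controlScale p ω q ^ 3 := by
    refine hexp.congr' ?_ .rfl
    filter_upwards [mem_principal_self _] with q hq
    rw [hz.deriv_eq q.1 (mapsTo_fst_timeSimplex 0 T hq.1)]
  have hdf : ∀ c ∈ z '' Icc 0 T, ContDiffAt ℝ 2 (fderiv ℝ f) c := fun c hc =>
    (hf c hc).fderiv_right (by norm_num)
  have hddf : ∀ c ∈ z '' Icc 0 T, ContDiffAt ℝ 1 (fderiv ℝ (fderiv ℝ f)) c := fun c hc =>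
    (hdf c hc).fderiv_right (by norm_num)
  have hK : IsCompact (z '' Icc 0 T) := isCompact_Icc.image_of_continuousOn hzc
  have hzK : MapsTo (fun q : ℝ × ℝ => z q.1) (timeSimplex 0 T) (z '' Icc 0 T) :=
    (mapsTo_image z _).comp (mapsTo_fst_timeSimplex 0 T)
  have hD := isBigO_one_comp_of_continuousOn
    (fun c hc => (hdf c hc).continuousAt.continuousWithinAt) hK hzK
  have hB := isBigO_one_comp_of_continuousOn (G := E →L[ℝ] E →L[ℝ] V)
    (fun c hc => (hddf c hc).continuousAt.continuousWithinAt) hK hzK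
  have htaylor := (isBigO_principal_prod_taylor_two hK hf).comp_tendsto
    (tendsto_prod_image_timeSimplex z 0 T)
  have hle : 𝓟 (timeSimplex 0 T ∩ {q | q.2 - q.1 ≤ δ}) ≤ 𝓟 (timeSimplex 0 T) :=
    principal_mono.2 inter_subset_left
  exact ⟨δ, hδ, isBigO_taylor_two_subst (hD.mono hle) (hB.mono hle) (hu.mono hle) (hv.mono hle)
    (hvu.mono hle) hexp' (htaylor.mono hle)⟩

theorem RelatedOn.hasDavieExpansion_comp (hrel : RelatedOn f F Ft U) (hp : 0 < p)
    (hω : IsControl T ω) (hX : IsRoughPath T p ω x XX) (hgeo : IsWeakGeometric T x XX)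
    (hU : IsOpen U) (hf : ContDiffOn ℝ 3 f U) (hF : DifferentiableOn ℝ F U)
    (hFt : ∀ a ∈ U, DifferentiableAt ℝ Ft (f a))
    {z : ℝ → E} {z' : ℝ → Euc k →L[ℝ] E} (hzU : MapsTo z (Icc 0 T) U)
    (hz : IsRDESolution T p ω x XX F z z') :
    HasDavieExpansion T p ω x XX Ft (fun s => f (z s)) := by
  obtain ⟨δ, hδ, hexp⟩ := hz.isBigO_expansion_comp hp hω hX fun c hc =>
    hf.contDiffAt (hU.mem_nhds (hzU.image_subset hc))
  refine (hasDavieExpansion_iff_isBigO hω).2 ⟨δ, hδ, hexp.congr' ?_ .rfl⟩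
  filter_upwards [mem_principal_self _] with q hq
  have hs := mapsTo_fst_timeSimplex 0 T hq.1
  have hnhds := hU.mem_nhds (hzU hs)
  rw [hrel.tapply_rdeCoeff hnhds ((hf.contDiffAt hnhds).of_le (by norm_num))
    (hF.differentiableAt hnhds) (hFt _ (hzU hs)) (hgeo hq.1.1 hq.1.2.1 hq.1.2.2),
    hz.deriv_eq q.1 hs, hrel _ (hzU hs)]

theorem related_dynamical_systems_rde_general (hp : 0 < p) (hω : IsControl T ω)
    (hX : IsRoughPath T p ω x XX) (hgeo : IsWeakGeometric T x XX) (hU : IsOpen U)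
    (hf : ContDiffOn ℝ 3 f U) (hF : DifferentiableOn ℝ F U)
    (hFt : ∀ a ∈ U, DifferentiableAt ℝ Ft (f a)) (hrel : RelatedOn f F Ft U)
    {z : ℝ → E} {z' : ℝ → Euc k →L[ℝ] E} (hzU : MapsTo z (Icc 0 T) U)
    (hz : IsRDESolution T p ω x XX F z z') :
    IsRDESolution T p ω x XX Ft (fun s => f (z s)) (fun s => (fderiv ℝ f (z s)).comp (z' s)) where
  deriv_eq s hs := by rw [hz.deriv_eq s hs, hrel.fderiv_comp (hzU hs)]
  isCRP := hz.isCRP.comp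
    (fun _ hc => (hf.contDiffAt (hU.mem_nhds (hzU.image_subset hc))).of_le (by norm_num))
    (fun _ => hω.nonneg_of_mem) (hω.isBigO_controlScale_one hp) hX.isBigO_sub
  expansion := hrel.hasDavieExpansion_comp hp hω hX hgeo hU hf hF hFt hzU hz

end RDE

/-- **Related dynamical systems map solutions of rough differential equations to solutions**
(Euclidean version of Theorem 6.11 of Driver–Semko): if `F` and `F̃` are `f`-related and
`(z, z')` solves `dz = F_{dX}(z)` in `U`, then `(f ∘ z, f'(z) ∘ z')` solves
`dz̃ = F̃_{dX}(z̃)`. -/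
theorem related_dynamical_systems_rde
    {T p : ℝ} (hT : 0 < T) (hp1 : 1 ≤ p) (hp3 : p < 3) {k : ℕ} (hk : 1 ≤ k)
    {ω : ℝ → ℝ → ℝ} (hω : IsControl T ω)
    {x : ℝ → Euc k} {XX : ℝ → ℝ → EuclideanSpace ℝ (Fin k × Fin k)}
    (hX : IsRoughPath T p ω x XX) (hgeo : IsWeakGeometric T x XX)
    {d d' : ℕ} {Us : Set (Euc d)} {Uts : Set (Euc d')}
    (hUs : IsOpen Us) (hUts : IsOpen Uts)
    {f : Euc d → Euc d'} (hf : ContDiffOn ℝ (⊤ : ℕ∞) f Us) (hfmaps : Set.MapsTo f Us Uts)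
    {F : Euc d → Euc k →L[ℝ] Euc d} (hF : ContDiffOn ℝ (⊤ : ℕ∞) F Us)
    {Ft : Euc d' → Euc k →L[ℝ] Euc d'} (hFt : ContDiffOn ℝ (⊤ : ℕ∞) Ft Uts)
    (hrel : ∀ c ∈ Us, ∀ w : Euc k, fderiv ℝ f c (F c w) = Ft (f c) w)
    {z : ℝ → Euc d} {z' : ℝ → Euc k →L[ℝ] Euc d}
    (hz'eq : ∀ s ∈ Set.Icc (0 : ℝ) T, z' s = F (z s))
    (hzU : ∀ s ∈ Set.Icc (0 : ℝ) T, z s ∈ Us)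
    (hcrp : IsCRP p ω x 0 T z z')
    (hrde : ∃ C δ : ℝ, 0 < δ ∧ ∀ ⦃s t : ℝ⦄, 0 ≤ s → s ≤ t → t ≤ T → t - s ≤ δ →
      ‖z t - z s - F (z s) (x t - x s) - tapply (rdeQuad F (z s)) (XX s t)‖
        ≤ C * ω s t ^ (3 / p)) :
    (∀ s ∈ Set.Icc (0 : ℝ) T, (fderiv ℝ f (z s)).comp (z' s) = Ft (f (z s))) ∧
    IsCRP p ω x 0 T (fun s => f (z s)) (fun s => (fderiv ℝ f (z s)).comp (z' s)) ∧
    ∃ C δ : ℝ, 0 < δ ∧ ∀ ⦃s t : ℝ⦄, 0 ≤ s → s ≤ t → t ≤ T → t - s ≤ δ →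
      ‖f (z t) - f (z s) - Ft (f (z s)) (x t - x s) -
          tapply (rdeQuad Ft (f (z s))) (XX s t)‖
        ≤ C * ω s t ^ (3 / p) := by
  have hft : ∀ a ∈ Us, DifferentiableAt ℝ Ft (f a) := fun a ha =>
    (hFt.contDiffAt (hUts.mem_nhds (hfmaps ha))).differentiableAt (by simp)
  obtain ⟨hderiv, hcrp', hexp⟩ := related_dynamical_systems_rde_general (one_pos.trans_le hp1)
    hω hX hgeo hUs (contDiffOn_infty.1 hf 3) (hF.differentiableOn (by simp)) hft hrel hzU
    ⟨hz'eq, hcrp, hrde⟩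
  exact ⟨hderiv, hcrp', hexp⟩
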